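/- arXiv:1310.2059 — 2 statements merged into one kernel-verified Lean document; each statement's English description precedes it below -/
import Mathlib

section
/- For every x ∈ ℝ^d it holds that ‖Ax‖₂² ≤ ω · Σ_{i=1}^{d} ‖A_{:i}‖₂² x_i², i.e., the quantity σ := max{xᵀQx : xᵀx ≤ 1} satisfies σ ≤ ω. -/
/-!
Row by row, `(Ax)_r` is a sum of at most `ω` nonzero terms `A r i * x i`, so Cauchy–Schwarz on the
support of the row bounds its square by `ω * ∑ i, (A r i * x i) ^ 2`. Summing over `r` and
exchanging the two sums gives the claim.
-/

open Finset

/-- For every `x ∈ ℝ^d`, `‖Ax‖₂² ≤ ω · Σ_i ‖A_{:i}‖₂² x_i²`, where `ω` is the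
maximum number of nonzero entries in a row of `A`.  This expresses `σ ≤ ω`. -/
theorem hydra_sigma_le_omega
    (n d : ℕ) (A : Matrix (Fin n) (Fin d) ℝ)
    (ω : ℕ)
    (hω : ω = Finset.univ.sup (fun r : Fin n =>
      (Finset.univ.filter (fun i : Fin d => A r i ≠ 0)).card))
    (x : Fin d → ℝ) :
    ∑ r : Fin n, (∑ i : Fin d, A r i * x i) ^ 2 ≤
      (ω : ℝ) * ∑ i : Fin d, (∑ r : Fin n, (A r i) ^ 2) * (x i) ^ 2 := by
  -- Cauchy–Schwarz in each row, restricted to the support of that row.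
  have row (r : Fin n) : (∑ i, A r i * x i) ^ 2 ≤ (ω : ℝ) * ∑ i, (A r i * x i) ^ 2 := by
    set S := Finset.univ.filter (fun i : Fin d => A r i ≠ 0) with hS
    have hcard : S.card ≤ ω := by
      rw [hω]
      exact Finset.le_sup (f := fun r : Fin n =>
        (Finset.univ.filter (fun i : Fin d => A r i ≠ 0)).card) (Finset.mem_univ r)
    have hsum : ∑ i ∈ S, A r i * x i = ∑ i, A r i * x i := by
      refine Finset.sum_subset (Finset.subset_univ S) fun i _ hi => ?_
      have h0 : A r i = 0 := by simpa [hS] using hi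
      simp [h0]
    calc (∑ i, A r i * x i) ^ 2 = (∑ i ∈ S, A r i * x i) ^ 2 := by rw [hsum]
      _ ≤ (S.card : ℝ) * ∑ i ∈ S, (A r i * x i) ^ 2 := sq_sum_le_card_mul_sum_sq
      _ ≤ (ω : ℝ) * ∑ i, (A r i * x i) ^ 2 := by
        gcongr
        exact Finset.subset_univ S
  calc ∑ r, (∑ i, A r i * x i) ^ 2 ≤ ∑ r, (ω : ℝ) * ∑ i, (A r i * x i) ^ 2 :=
        Finset.sum_le_sum fun r _ => row r
    _ = (ω : ℝ) * ∑ i, (∑ r, (A r i) ^ 2) * (x i) ^ 2 := by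
        rw [← Finset.mul_sum, Finset.sum_comm]
        simp only [mul_pow, Finset.sum_mul]
end

section
/- Let c ≥ 1 and 2 ≤ τ ≤ s be integers, let d = c·s, and let σ, σ' be real numbers with σ ≥ 1 and 1 ≤ σ' ≤ c. Then β* ≤ 2β₁*, i.e., β₂* ≤ β₁*, where s₁ = max(1, s−1), β₁* = 1 + (τ−1)(σ−1)/s₁, β₂* = (τ/s − (τ−1)/s₁)·((σ'−1)/σ')·σ, and β* = β₁* + β₂*. -/
/-!
Put `r = (τ - 1)/s₁ ∈ [0, 1]` and `a = τ/s - r`, where `s₁ = s - 1` because `s ≥ 2`.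
Then `0 ≤ a ≤ r`, and `(σ' - 1)/σ' ≤ 1`, so `β₂ ≤ a σ ≤ r σ ≤ (1 - r) + r σ = β₁`.
-/

/-- Lemma `prop:2beta_1` of the paper: Let `c ≥ 1` and `2 ≤ τ ≤ s` be integers,
`d = c·s`, and let `σ, σ'` be reals with `σ ≥ 1` and `1 ≤ σ' ≤ c`.  Then `β* ≤ 2β₁*`
(equivalently `β₂* ≤ β₁*`), where `s₁ = max(1, s−1)`, `β₁* = 1 + (τ−1)(σ−1)/s₁`,
`β₂* = (τ/s − (τ−1)/s₁)·((σ'−1)/σ')·σ`, and `β* = β₁* + β₂*`. -/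
theorem hydra_beta_le_two_beta1
    (c τ s d : ℕ) (hc : 1 ≤ c) (hτ : 2 ≤ τ) (hτs : τ ≤ s) (hd : d = c * s)
    (σ σ' : ℝ) (hσ : 1 ≤ σ) (hσ'1 : 1 ≤ σ') (hσ'c : σ' ≤ (c : ℝ))
    (s₁ : ℕ) (hs₁ : s₁ = max 1 (s - 1))
    (β₁ β₂ βstar : ℝ)
    (hβ₁ : β₁ = 1 + ((τ : ℝ) - 1) * (σ - 1) / (s₁ : ℝ))
    (hβ₂ : β₂ = ((τ : ℝ) / (s : ℝ) - ((τ : ℝ) - 1) / (s₁ : ℝ)) * ((σ' - 1) / σ') * σ)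
    (hβstar : βstar = β₁ + β₂) :
    βstar ≤ 2 * β₁ := by
  have hs₁s : s₁ + 1 = s := by omega
  have hs : (s : ℝ) = s₁ + 1 := by exact_mod_cast hs₁s.symm
  have hp : (0 : ℝ) < s₁ := by exact_mod_cast (by omega : 0 < s₁)
  have hτ2 : (2 : ℝ) ≤ τ := by exact_mod_cast hτ
  have hτs' : (τ : ℝ) ≤ s₁ + 1 := by rw [← hs]; exact_mod_cast hτs
  have hr1 : ((τ : ℝ) - 1) / s₁ ≤ 1 := by rw [div_le_one hp]; linarith
  have ha0 : 0 ≤ (τ : ℝ) / s - ((τ : ℝ) - 1) / s₁ := by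
    rw [hs, sub_nonneg, div_le_div_iff₀ hp (by linarith)]
    nlinarith
  -- Since `τ ≥ 2`, `τ ≤ 2(τ - 1)`, and `s₁ ≤ s`; hence `τ/s ≤ 2(τ - 1)/s₁`.
  have har : (τ : ℝ) / s - ((τ : ℝ) - 1) / s₁ ≤ ((τ : ℝ) - 1) / s₁ := by
    have h : (τ : ℝ) / s ≤ (2 * ((τ : ℝ) - 1)) / s₁ := by
      rw [hs]
      exact div_le_div₀ (by linarith) (by linarith) hp (by linarith)
    rw [mul_div_assoc] at h
    linarith
  have hq : (σ' - 1) / σ' ≤ 1 := by rw [div_le_one (by linarith)]; linarith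
  have hβ₂le : β₂ ≤ ((τ : ℝ) - 1) / s₁ * σ := by
    rw [hβ₂]
    exact mul_le_mul_of_nonneg_right
      ((mul_le_of_le_one_right ha0 hq).trans har) (by linarith)
  have hβ₁' : β₁ = 1 - ((τ : ℝ) - 1) / s₁ + ((τ : ℝ) - 1) / s₁ * σ := by
    rw [hβ₁]; ring
  linarith
end
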